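/- Let d ≥ 1 be an integer, α ∈ (0,1), let u : ℝ^d → ℝ be bounded and Lipschitz, assume that (x,z) ↦ |u(x) − u(x+z)| / |z|^{d+α} is integrable on ℝ^d × ℝ^d, and let η : ℝ → ℝ be convex and differentiable. Then x ↦ η'(u(x)) · Lu(x) is integrable on ℝ^d and ∫_{ℝ^d} η'(u(x)) · Lu(x) dx ≥ 0. -/

import Mathlib

open MeasureTheory Real Set

noncomputable section

/-- The singular-integral fractional Laplacian
`Lφ(x) = ∫_{ℝ^d} (φ(x) - φ(x+z)) / |z|^{d+α} dz`. -/
def fracLap (d : ℕ) (α : ℝ) (φ : EuclideanSpace ℝ (Fin d) → ℝ)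
    (x : EuclideanSpace ℝ (Fin d)) : ℝ :=
  ∫ z : EuclideanSpace ℝ (Fin d), (φ x - φ (x + z)) / ‖z‖ ^ ((d : ℝ) + α)

/-!
Exchanging the two endpoints of the jump `x → x + z` is the map `(x, z) ↦ (x + z, -z)`, which
preserves the product measure. Averaging `g (u x) (u x - u (x + z)) K z` with its image under this
exchange gives `(g (u x) - g (u (x + z))) (u x - u (x + z)) K z / 2`, which is nonnegative for every
monotone `g`, in particular for the derivative of a convex function. Fubini turns the integral over
pairs into the integral of `g (u x)` times the operator applied to `u`.
-/

theorem integral_nonneg_of_add_comp_nonneg {X : Type*} [MeasurableSpace X] {μ : Measure X}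
    {T : X → X} {f : X → ℝ} (hT : MeasurePreserving T μ μ) (hf : Integrable f μ)
    (hnonneg : ∀ x, 0 ≤ f x + f (T x)) : 0 ≤ ∫ x, f x ∂μ := by
  have hfT : ∫ x, f (T x) ∂μ = ∫ x, f x ∂μ := by
    rw [← integral_map hT.aemeasurable (hT.map_eq.symm ▸ hf.aestronglyMeasurable), hT.map_eq]
  have hsum : 0 ≤ ∫ x, f x ∂μ + ∫ x, f (T x) ∂μ := by
    have hTint : Integrable (fun x => f (T x)) μ := hT.integrable_comp_of_integrable hf
    rw [← integral_add hf hTint]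
    exact integral_nonneg hnonneg
  linarith

theorem abs_apply_le_max_of_monotone {A B : Type*} [AddCommGroup A] [LinearOrder A]
    [IsOrderedAddMonoid A] [AddCommGroup B] [LinearOrder B] [IsOrderedAddMonoid B] {g : A → B}
    (hg : Monotone g) {a b : A} (hab : |a| ≤ b) : |g a| ≤ max |g (-b)| |g b| :=
  abs_le_max_abs_abs (hg (abs_le.mp hab).1) (hg (abs_le.mp hab).2)

section EntropyProduction

variable {G : Type*} [AddGroup G]

/-- The integrand on pairs (base point, jump) whose integral in the jump variable is
`g (u x) * jumpOperator ν K u x`; for `g = η'` its total integral is the entropy production. -/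
def entropyProductionDensity (K u : G → ℝ) (g : ℝ → ℝ) (p : G × G) : ℝ :=
  g (u p.1) * ((u p.1 - u (p.1 + p.2)) * K p.2)

variable {K u : G → ℝ} {g : ℝ → ℝ}

theorem entropyProductionDensity_add_exchange_nonneg (hK_nonneg : ∀ z, 0 ≤ K z)
    (hK_even : ∀ z, K (-z) = K z) (hg : Monotone g) (p : G × G) :
    0 ≤ entropyProductionDensity K u g p +
      entropyProductionDensity K u g (p.1 + p.2, -p.2) := by
  calc 0 ≤ (g (u p.1) - g (u (p.1 + p.2))) * (u p.1 - u (p.1 + p.2)) * K p.2 :=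
        mul_nonneg ((hg.monovary monotone_id).sub_mul_sub_nonneg _ _) (hK_nonneg _)
    _ = _ := by
        simp only [entropyProductionDensity, add_neg_cancel_right, hK_even]
        ring

variable [MeasurableSpace G]

/-- The jump operator `φ ↦ ∫ (φ(x) - φ(x+z)) K(z) dν(z)` with jump measure `K dν`. Keeping the
density `K` apart from the reference measure `ν` covers both singular kernels against Haar measure
and arbitrary jump measures (`K = 1`). -/
def jumpOperator (ν : Measure G) (K φ : G → ℝ) (x : G) : ℝ :=
  ∫ z, (φ x - φ (x + z)) * K z ∂ν

theorem measurePreserving_add_neg [MeasurableAdd₂ G] [MeasurableNeg G] (μ ν : Measure G) [SFinite μ]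
    [SFinite ν] [μ.IsAddRightInvariant] [ν.IsNegInvariant] :
    MeasurePreserving (fun p : G × G => (p.1 + p.2, -p.2)) (μ.prod ν) (μ.prod ν) := by
  have hskew : MeasurePreserving (fun q : G × G => (-q.1, q.2 + q.1)) (ν.prod μ) (ν.prod μ) :=
    (Measure.measurePreserving_neg ν).skew_product (g := fun z x => x + z)
      (measurable_snd.add measurable_fst) (.of_forall <| map_add_right_eq_self μ)
  exact Measure.measurePreserving_swap.comp (hskew.comp Measure.measurePreserving_swap)

theorem integral_entropyProductionDensity_right (ν : Measure G) (x : G) :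
    ∫ z, entropyProductionDensity K u g (x, z) ∂ν = g (u x) * jumpOperator ν K u x :=
  integral_const_mul (g (u x)) fun z => (u x - u (x + z)) * K z

theorem integrable_entropyProductionDensity {μ ν : Measure G} [SFinite ν] {C : ℝ}
    (hgu : AEStronglyMeasurable (fun x => g (u x)) μ) (hC : ∀ x, |g (u x)| ≤ C)
    (hint : Integrable (fun p : G × G => (u p.1 - u (p.1 + p.2)) * K p.2) (μ.prod ν)) :
    Integrable (entropyProductionDensity K u g) (μ.prod ν) :=
  hint.bdd_mul hgu.comp_fst (.of_forall fun p => hC p.1)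

theorem integrable_increment_mul_inv [MeasurableAdd₂ G] {μ : Measure (G × G)} {w : G → ℝ}
    (hu : Measurable u) (hw : Measurable w) (hw_nonneg : ∀ z, 0 ≤ w z)
    (hint : Integrable (fun p : G × G => |u p.1 - u (p.1 + p.2)| / w p.2) μ) :
    Integrable (fun p : G × G => (u p.1 - u (p.1 + p.2)) * (w p.2)⁻¹) μ := by
  have hmeas : Measurable fun p : G × G => (u p.1 - u (p.1 + p.2)) * (w p.2)⁻¹ := by fun_prop
  refine (integrable_norm_iff hmeas.aestronglyMeasurable).mp (hint.congr (.of_forall fun p => ?_))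
  simp only [norm_eq_abs, abs_mul, abs_inv, abs_of_nonneg (hw_nonneg p.2), div_eq_mul_inv]

theorem fracLap_entropy_production_general [MeasurableAdd₂ G] [MeasurableNeg G] {μ ν : Measure G}
    [SFinite μ] [SFinite ν] [μ.IsAddRightInvariant] [ν.IsNegInvariant] {C : ℝ}
    (hK_nonneg : ∀ z, 0 ≤ K z) (hK_even : ∀ z, K (-z) = K z) (hu : AEMeasurable u μ)
    (hint : Integrable (fun p : G × G => (u p.1 - u (p.1 + p.2)) * K p.2) (μ.prod ν))
    (hg : Monotone g) (hC : ∀ x, |g (u x)| ≤ C) :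
    Integrable (fun x => g (u x) * jumpOperator ν K u x) μ ∧
      0 ≤ ∫ x, g (u x) * jumpOperator ν K u x ∂μ := by
  have hdensity : Integrable (entropyProductionDensity K u g) (μ.prod ν) :=
    integrable_entropyProductionDensity (hg.measurable.comp_aemeasurable hu).aestronglyMeasurable
      hC hint
  simp only [← integral_entropyProductionDensity_right]
  refine ⟨hdensity.integral_prod_left, ?_⟩
  rw [← integral_prod _ hdensity]
  exact integral_nonneg_of_add_comp_nonneg (measurePreserving_add_neg μ ν) hdensity
    (entropyProductionDensity_add_exchange_nonneg hK_nonneg hK_even hg)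

end EntropyProduction

theorem fracLap_eq_jumpOperator (d : ℕ) (α : ℝ) :
    fracLap d α = jumpOperator volume (fun z => (‖z‖ ^ ((d : ℝ) + α))⁻¹) := by
  funext φ x
  simp only [fracLap, jumpOperator, div_eq_mul_inv]

/-- Entropy production: for `α ∈ (0,1)`, `u : ℝ^d → ℝ` bounded and
Lipschitz with `(x,z) ↦ |u(x) - u(x+z)|/|z|^{d+α}` integrable on `ℝ^d × ℝ^d`, and
`η : ℝ → ℝ` convex differentiable, the function `x ↦ η'(u(x))·Lu(x)` is integrable
and `∫ η'(u(x))·Lu(x) dx ≥ 0`. -/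
theorem fracLap_entropy_production
    (d : ℕ) (hd : 1 ≤ d) (α : ℝ) (hα : α ∈ Set.Ioo (0 : ℝ) 1)
    (u : EuclideanSpace ℝ (Fin d) → ℝ)
    (hubd : ∃ B : ℝ, ∀ x, |u x| ≤ B) (huLip : ∃ M : NNReal, LipschitzWith M u)
    (hprod : Integrable (fun p : EuclideanSpace ℝ (Fin d) × EuclideanSpace ℝ (Fin d) =>
        |u p.1 - u (p.1 + p.2)| / ‖p.2‖ ^ ((d : ℝ) + α)))
    (η : ℝ → ℝ) (hconv : ConvexOn ℝ Set.univ η) (hdiff : Differentiable ℝ η) :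
    Integrable (fun x => deriv η (u x) * fracLap d α u x) ∧
    0 ≤ ∫ x : EuclideanSpace ℝ (Fin d), deriv η (u x) * fracLap d α u x := by
  obtain ⟨B, hB⟩ := hubd
  obtain ⟨M, hM⟩ := huLip
  have hmono : Monotone (deriv η) :=
    monotoneOn_univ.mp (hconv.monotoneOn_deriv fun x _ => hdiff x)
  have hu : Measurable u := hM.continuous.measurable
  have hweight_nonneg (z : EuclideanSpace ℝ (Fin d)) : 0 ≤ ‖z‖ ^ ((d : ℝ) + α) := by positivity
  rw [fracLap_eq_jumpOperator]
  exact fracLap_entropy_production_general (fun z => inv_nonneg.mpr (hweight_nonneg z))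
    (fun z => by rw [norm_neg]) hu.aemeasurable
    (integrable_increment_mul_inv hu (measurable_norm.pow_const _) hweight_nonneg hprod)
    hmono (fun x => abs_apply_le_max_of_monotone hmono (hB x))
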